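/- Let B be a binary doubly even [36,6,16] code such that the dual code B⊥ has minimum Hamming weight 3. Then the weight enumerator of B is uniquely determined: B has exactly 27 codewords of weight 16 and exactly 36 codewords of weight 20, and every nonzero codeword of B has weight 16 or 20. -/

import Mathlib

noncomputable section

/-- The dual code `B⊥ = {x ∈ F₂ⁿ : x·y = 0 for all y ∈ B}`. -/
def dualCode {n : ℕ} (B : Submodule (ZMod 2) (Fin n → ZMod 2)) : Set (Fin n → ZMod 2) :=
  {x | ∀ y ∈ B, ∑ i, x i * y i = 0}

/-- A binary code is doubly even if every codeword has Hamming weight divisible by 4. -/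
def IsDoublyEven {n : ℕ} (B : Submodule (ZMod 2) (Fin n → ZMod 2)) : Prop :=
  ∀ c ∈ B, 4 ∣ hammingNorm c

/-- A set of binary words has minimum weight `d`:
`d` is the least Hamming weight among its nonzero elements. -/
def HasMinWeight {n : ℕ} (S : Set (Fin n → ZMod 2)) (d : ℕ) : Prop :=
  IsLeast {w : ℕ | ∃ c ∈ S, c ≠ 0 ∧ hammingNorm c = w} d

/-- The number of words of Hamming weight `w` in `S`. -/
def weightCount {n : ℕ} (S : Set (Fin n → ZMod 2)) (w : ℕ) : ℕ :=
  Set.ncard {c ∈ S | hammingNorm c = w}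

/-- The sign character of `F₂`. -/
def chi (x : ZMod 2) : ℤ := if x = 0 then 1 else -1

theorem chi_add (x y : ZMod 2) : chi (x + y) = chi x * chi y := by
  revert x y; decide

/-- The codewords of `B` as a finset. -/
@[irreducible] def words (B : Submodule (ZMod 2) (Fin 36 → ZMod 2)) : Finset (Fin 36 → ZMod 2) :=
  (Set.toFinite (B : Set (Fin 36 → ZMod 2))).toFinset

theorem mem_words {B : Submodule (ZMod 2) (Fin 36 → ZMod 2)} (c : Fin 36 → ZMod 2) :
    c ∈ words B ↔ c ∈ B := by
  rw [words, Set.Finite.mem_toFinset, SetLike.mem_coe]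

theorem card_words {B : Submodule (ZMod 2) (Fin 36 → ZMod 2)}
    (hdim : Module.finrank (ZMod 2) B = 6) : (words B).card = 64 := by
  have h := Module.natCard_eq_pow_finrank (K := ZMod 2) (V := B)
  rw [hdim, Nat.card_zmod] at h
  rw [words, ← Set.ncard_eq_toFinset_card]
  norm_num at h
  exact h

theorem char_sum {B : Submodule (ZMod 2) (Fin 36 → ZMod 2)} (u : Fin 36 → ZMod 2)
    (hu : u ∉ dualCode B) : ∑ c ∈ words B, chi (∑ i, u i * c i) = 0 := by
  simp only [dualCode, Set.mem_ofPred_eq, not_forall] at hu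
  obtain ⟨y, hy, hne⟩ := hu
  have hneg : chi (∑ i, u i * y i) = -1 := by simp [chi, hne]
  have h : ∑ c ∈ words B, chi (∑ i, u i * c i)
      = ∑ c ∈ words B, chi (∑ i, u i * (c + y) i) := by
    symm
    refine Finset.sum_bij (fun c _ => c + y) ?_ ?_ ?_ ?_
    · intro c hc
      rw [mem_words] at *
      exact B.add_mem hc hy
    · intro a _ b _ h
      exact add_right_cancel h
    · intro b hb
      rw [mem_words] at hb
      exact ⟨b - y, (mem_words _).2 (B.sub_mem hb hy), by simp⟩
    · intro c _
      rfl
  have h2 : ∑ c ∈ words B, chi (∑ i, u i * (c + y) i)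
      = -∑ c ∈ words B, chi (∑ i, u i * c i) := by
    rw [← Finset.sum_neg_distrib]
    refine Finset.sum_congr rfl fun c _ => ?_
    simp only [Pi.add_apply, mul_add, Finset.sum_add_distrib]
    rw [chi_add, hneg]; ring
  omega

theorem sum_chi (c : Fin 36 → ZMod 2) : ∑ i, chi (c i) = 36 - 2 * (hammingNorm c : ℤ) := by
  have h : ∀ i, chi (c i) = 1 - 2 * (if c i ≠ 0 then 1 else 0) := by
    intro i
    by_cases h : c i = 0 <;> simp [chi, h]
  simp only [h, Finset.sum_sub_distrib, ← Finset.mul_sum, hammingNorm, Finset.sum_boole]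
  simp

theorem not_mem_dual {B : Submodule (ZMod 2) (Fin 36 → ZMod 2)}
    (hdual : HasMinWeight (dualCode B) 3) (u : Fin 36 → ZMod 2) (h0 : u ≠ 0)
    (h2 : hammingNorm u ≤ 2) : u ∉ dualCode B := by
  intro h
  have := hdual.2 ⟨u, h, h0, rfl⟩
  omega

theorem norm_pair (i j : Fin 36) (a b : ZMod 2) :
    hammingNorm (Pi.single i a + Pi.single j b : Fin 36 → ZMod 2) ≤ 2 := by
  refine le_trans (Finset.card_le_card (t := {i, j}) ?_) Finset.card_le_two
  intro k hk
  simp only [Finset.mem_filter, Finset.mem_univ, true_and] at hk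
  by_contra hc
  simp only [Finset.mem_insert, Finset.mem_singleton, not_or] at hc
  exact hk (by simp [hc.1, hc.2])

theorem single_sum {B : Submodule (ZMod 2) (Fin 36 → ZMod 2)}
    (hdual : HasMinWeight (dualCode B) 3) (i : Fin 36) :
    ∑ c ∈ words B, chi (c i) = 0 := by
  have h := char_sum (B := B) (Pi.single i 1) (not_mem_dual hdual _ (by simp)
    (by simpa using norm_pair i i 1 0))
  simpa [Pi.single_apply] using h

theorem pair_sum {B : Submodule (ZMod 2) (Fin 36 → ZMod 2)}
    (hdual : HasMinWeight (dualCode B) 3) (i j : Fin 36) (hij : i ≠ j) :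
    ∑ c ∈ words B, chi (c i) * chi (c j) = 0 := by
  have h := char_sum (B := B) (Pi.single i 1 + Pi.single j 1) (not_mem_dual hdual _
    (fun h => by have := congrFun h i; simp [hij] at this)
    (norm_pair i j 1 1))
  simpa [Pi.single_apply, add_mul, Finset.sum_add_distrib, chi_add] using h

theorem moment_one {B : Submodule (ZMod 2) (Fin 36 → ZMod 2)}
    (hdual : HasMinWeight (dualCode B) 3) :
    ∑ c ∈ words B, (36 - 2 * (hammingNorm c : ℤ)) = 0 := by
  simp only [← sum_chi]
  rw [Finset.sum_comm]
  exact Finset.sum_eq_zero fun i _ => single_sum hdual i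

theorem moment_two {B : Submodule (ZMod 2) (Fin 36 → ZMod 2)}
    (hdim : Module.finrank (ZMod 2) B = 6) (hdual : HasMinWeight (dualCode B) 3) :
    ∑ c ∈ words B, (36 - 2 * (hammingNorm c : ℤ)) ^ 2 = 64 * 36 := by
  simp only [← sum_chi, sq, Finset.sum_mul_sum]
  rw [Finset.sum_comm]
  have : ∀ i ∈ (Finset.univ : Finset (Fin 36)),
      ∑ c ∈ words B, ∑ j, chi (c i) * chi (c j) = 64 := by
    intro i _
    rw [Finset.sum_comm, Finset.sum_eq_single i]
    · have h1 : ∀ x : ZMod 2, chi x * chi x = 1 := by decide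
      simp [h1, card_words hdim]
    · intro j _ hj
      exact pair_sum hdual i j hj.symm
    · simp
  rw [Finset.sum_congr rfl this]
  simp

theorem weightCount_eq {B : Submodule (ZMod 2) (Fin 36 → ZMod 2)} (w : ℕ) :
    weightCount (B : Set (Fin 36 → ZMod 2)) w
      = ((words B).filter (fun c => hammingNorm c = w)).card := by
  rw [weightCount, ← Set.ncard_coe_finset]
  congr 1
  ext c
  simp [mem_words]

theorem weight_enumerator_36_6_16 {B : Submodule (ZMod 2) (Fin 36 → ZMod 2)}
    (hdim : Module.finrank (ZMod 2) B = 6)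
    (hde : IsDoublyEven B)
    (hmin : HasMinWeight (B : Set (Fin 36 → ZMod 2)) 16)
    (hdual : HasMinWeight (dualCode B) 3) :
    weightCount (B : Set (Fin 36 → ZMod 2)) 16 = 27 ∧
      weightCount (B : Set (Fin 36 → ZMod 2)) 20 = 36 ∧
      ∀ c ∈ B, c ≠ 0 → hammingNorm c = 16 ∨ hammingNorm c = 20 := by
  classical
  have hz : (0 : Fin 36 → ZMod 2) ∈ words B := (mem_words _).2 B.zero_mem
  have hcard := card_words hdim
  have m1 := moment_one hdual
  have m2 := moment_two hdim hdual
  have hlow : ∀ c ∈ B, c ≠ 0 → 16 ≤ hammingNorm c := fun c hc h0 => hmin.2 ⟨c, hc, h0, rfl⟩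
  set T := (words B).erase 0 with hT
  have hcT : T.card = 63 := by rw [hT, Finset.card_erase_of_mem hz, hcard]
  rw [← Finset.add_sum_erase _ _ hz, ← hT] at m1 m2
  simp only [hammingNorm_zero] at m1 m2
  have memT : ∀ c ∈ T, c ∈ B ∧ c ≠ 0 := fun c hc => by
    rw [hT, Finset.mem_erase, mem_words] at hc
    exact ⟨hc.2, hc.1⟩
  have hnn : ∀ c ∈ T, 0 ≤ (36 - 2 * (hammingNorm c : ℤ)) ^ 2 - 16 := by
    intro c hc
    obtain ⟨hB, h0⟩ := memT c hc
    have h1 := hlow c hB h0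
    obtain ⟨k, hk⟩ := hde c hB
    have h3 : k = 4 ∨ 5 ≤ k := by omega
    rw [hk]
    push_cast
    rcases h3 with rfl | h3
    · norm_num
    · have : (5 : ℤ) ≤ k := by exact_mod_cast h3
      nlinarith
  have hs : ∑ c ∈ T, ((36 - 2 * (hammingNorm c : ℤ)) ^ 2 - 16) = 0 := by
    rw [Finset.sum_sub_distrib, Finset.sum_const, hcT]
    norm_num at m2 ⊢
    linarith
  have hall := (Finset.sum_eq_zero_iff_of_nonneg hnn).1 hs
  have hw : ∀ c ∈ B, c ≠ 0 → hammingNorm c = 16 ∨ hammingNorm c = 20 := by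
    intro c hB h0
    have h := hall c (by rw [hT, Finset.mem_erase, mem_words]; exact ⟨h0, hB⟩)
    have h' : (16 - (hammingNorm c : ℤ)) * (20 - hammingNorm c) = 0 := by linarith
    rcases mul_eq_zero.1 h' with h | h <;> omega
  have hf : ∀ w, w ≠ 0 → (words B).filter (fun c => hammingNorm c = w)
      = T.filter (fun c => hammingNorm c = w) := by
    intro w hw0
    ext c
    simp only [hT, Finset.mem_filter, Finset.mem_erase]
    constructor
    · rintro ⟨h1, h2⟩
      refine ⟨⟨?_, h1⟩, h2⟩
      rintro rfl
      exact hw0 (by simpa using h2.symm)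
    · rintro ⟨⟨_, h1⟩, h2⟩
      exact ⟨h1, h2⟩
  have hs1 : ∑ c ∈ T, (36 - 2 * (hammingNorm c : ℤ))
      = 8 * ((T.filter (fun c => hammingNorm c = 16)).card : ℤ) - 4 * 63 := by
    have : ∀ c ∈ T, (36 - 2 * (hammingNorm c : ℤ))
        = 8 * (if hammingNorm c = 16 then 1 else 0) - 4 := by
      intro c hc
      rcases hw c (memT c hc).1 (memT c hc).2 with h | h <;> simp [h]
    rw [Finset.sum_congr rfl this, Finset.sum_sub_distrib, ← Finset.mul_sum, Finset.sum_boole,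
      Finset.sum_const, hcT]
    norm_num
  have hs2 : ∑ c ∈ T, (36 - 2 * (hammingNorm c : ℤ))
      = 4 * 63 - 8 * ((T.filter (fun c => hammingNorm c = 20)).card : ℤ) := by
    have : ∀ c ∈ T, (36 - 2 * (hammingNorm c : ℤ))
        = 4 - 8 * (if hammingNorm c = 20 then 1 else 0) := by
      intro c hc
      rcases hw c (memT c hc).1 (memT c hc).2 with h | h <;> simp [h]
    rw [Finset.sum_congr rfl this, Finset.sum_sub_distrib, ← Finset.mul_sum, Finset.sum_boole,
      Finset.sum_const, hcT]
    norm_num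
  refine ⟨?_, ?_, hw⟩
  · rw [weightCount_eq, hf 16 (by norm_num)]
    omega
  · rw [weightCount_eq, hf 20 (by norm_num)]
    omega
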